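/- arXiv:1406.7027 — 5 statements merged into one kernel-verified Lean document; each statement's English description precedes it below -/
import Mathlib

section
/- Let X be a compact metric space, f : X → X continuous, φ : X → ℝ continuous, and let μ be an ergodic f-invariant Borel probability measure with ∫ φ dμ = 0. Then for μ-almost every x ∈ X there exists a sequence of integers n_k → ∞ such that f^{n_k}(x) → x and S_{n_k}f(x) → 0. -/
open MeasureTheory Filter Topology

section
variable {X : Type*} [MetricSpace X] [CompactSpace X]
    [MeasurableSpace X] [BorelSpace X]

lemma cont_bs {f : X → X} (hf : Continuous f) {φ : X → ℝ} (hφ : Continuous φ) (n : ℕ) :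
    Continuous (birkhoffSum f φ n) := by
  unfold birkhoffSum
  exact continuous_finsetSum _ fun i _ => hφ.comp (hf.iterate i)

lemma cont_memLp {μ : Measure X} [IsProbabilityMeasure μ] {g : X → ℝ} (hg : Continuous g) :
    MemLp g 2 μ := hg.memLp_of_hasCompactSupport (HasCompactSupport.of_compactSpace g)

lemma count_bound (N : ℕ) (hN : 0 < N) (ε M : ℝ) (hε : 0 < ε) (hM : 0 ≤ M) (T : Finset ℕ) (s : ℕ → ℝ)
    (hs : ∀ i ∈ T, |s i| ≤ M)
    (hsep : ∀ i ∈ T, ∀ j ∈ T, i + N ≤ j → ε ≤ |s j - s i|) :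
    (T.card : ℝ) ≤ N * (2 * M / ε + 2) := by
  have hinj : T.card ≤ (Finset.range N ×ˢ Finset.Icc ⌊-M / ε⌋ ⌊M / ε⌋).card := by
    apply Finset.card_le_card_of_injOn (fun i => (i % N, ⌊s i / ε⌋))
    · intro i hi
      have := abs_le.1 (hs i hi)
      simp only [Finset.coe_product, Set.mem_prod, Finset.mem_coe, Finset.mem_range, Finset.mem_Icc]
      refine ⟨Nat.mod_lt _ hN, Int.floor_le_floor ?_, Int.floor_le_floor ?_⟩
      · gcongr; exact this.1
      · gcongr; exact this.2
    · have key : ∀ i ∈ T, ∀ j ∈ T, i < j → i % N = j % N → ⌊s i / ε⌋ ≠ ⌊s j / ε⌋ := by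
        intro i hi j hj hij hm hfl
        have h1 : N ∣ j - i := (Nat.modEq_iff_dvd' hij.le).1 hm
        have h2 := Nat.le_of_dvd (by omega) h1
        have h3 := hsep i hi j hj (by omega)
        have h4 := Int.abs_sub_lt_one_of_floor_eq_floor hfl
        rw [← sub_div, abs_div, abs_of_pos hε, div_lt_one hε, abs_sub_comm] at h4
        linarith
      intro i hi j hj hij
      simp only [Prod.mk.injEq] at hij
      rcases lt_trichotomy i j with h | h | h
      · exact absurd hij.2 (key i hi j hj h hij.1)
      · exact h
      · exact absurd hij.2.symm (key j hj i hi h hij.1.symm)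
  rw [Finset.card_product, Finset.card_range, Int.card_Icc] at hinj
  have h5 : ((⌊M / ε⌋ + 1 - ⌊-M / ε⌋).toNat : ℝ) ≤ 2 * M / ε + 2 := by
    have h0 : ⌊-M / ε⌋ ≤ ⌊M / ε⌋ := by
      apply Int.floor_le_floor; gcongr; linarith
    have : (((⌊M / ε⌋ + 1 - ⌊-M / ε⌋).toNat : ℤ) : ℝ) = ((⌊M / ε⌋ + 1 - ⌊-M / ε⌋ : ℤ) : ℝ) := by
      rw [Int.toNat_of_nonneg (by omega)]
    rw [Int.cast_natCast] at this
    rw [this]; push_cast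
    have a := Int.floor_le (M / ε)
    have b := Int.lt_floor_add_one (-M / ε)
    have c : 2 * M / ε = M / ε - (-M / ε) := by ring
    linarith
  calc (T.card : ℝ) ≤ ((N * (⌊M / ε⌋ + 1 - ⌊-M / ε⌋).toNat : ℕ) : ℝ) := by exact_mod_cast hinj
    _ ≤ _ := by push_cast; gcongr

lemma bs_toLp {μ : Measure X} [IsProbabilityMeasure μ] {f : X → X} (hf : Continuous f)
    {φ : X → ℝ} (hφ : Continuous φ) (hmp : MeasurePreserving f μ μ) (n : ℕ) :
    birkhoffSum (Lp.compMeasurePreservingₗᵢ ℝ (p := 2) (E := ℝ) f hmp).toContinuousLinearMap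
      _root_.id n (cont_memLp (μ := μ) hφ).toLp = (cont_memLp (cont_bs hf hφ n)).toLp := by
  have hit : ∀ i, (Lp.compMeasurePreservingₗᵢ ℝ (p := 2) (E := ℝ) f hmp).toContinuousLinearMap^[i]
      (cont_memLp (μ := μ) hφ).toLp = (cont_memLp (hφ.comp (hf.iterate i))).toLp := by
    intro i
    induction i with
    | zero => rfl
    | succ i ih =>
      rw [Function.iterate_succ_apply', ih]
      rfl
  induction n with
  | zero => simp only [birkhoffSum_zero]; symm; exact MemLp.toLp_zero _
  | succ n ih =>
    rw [birkhoffSum_succ, ih, _root_.id, hit, ← MemLp.toLp_add]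
    congr 1
    ext x
    rw [birkhoffSum_succ]; rfl

lemma l1_tendsto {f : X → X} (hf : Continuous f) {φ : X → ℝ} (hφ : Continuous φ)
    {μ : Measure X} [IsProbabilityMeasure μ] (hμ : Ergodic f μ)
    (hint : ∫ x, φ x ∂μ = 0) :
    Tendsto (fun n : ℕ => ∫ x, |(n : ℝ)⁻¹ * birkhoffSum f φ n x| ∂μ) atTop (𝓝 0) := by
  have hmp := hμ.toMeasurePreserving
  set U := (Lp.compMeasurePreservingₗᵢ ℝ (p := 2) (E := ℝ) f hmp).toContinuousLinearMap with hU
  set u := (cont_memLp (μ := μ) hφ).toLp with hu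
  have hT := U.tendsto_birkhoffAverage_orthogonalProjection
    (LinearIsometry.norm_toContinuousLinearMap_le _) u
  have hz : (U.eqLocus (1 : Lp ℝ 2 μ →L[ℝ] Lp ℝ 2 μ)).orthogonalProjectionOnto u = 0 := by
    rw [Submodule.orthogonalProjectionOnto_eq_zero_iff, Submodule.mem_orthogonal]
    intro v hv
    have hv' : U v = v := hv
    have h1 : (v ∘ f : X → ℝ) =ᵐ[μ] v := by
      have := Lp.coeFn_compMeasurePreserving v hmp
      refine this.symm.trans ?_
      have h2 : Lp.compMeasurePreserving f hmp v = v := hv'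
      rw [h2]
    obtain ⟨c, hc⟩ := hμ.ae_eq_const_of_ae_eq_comp_ae (Lp.aestronglyMeasurable v) h1
    rw [L2.inner_def]
    have : ∫ a, inner ℝ (v a) (u a) ∂μ = ∫ a, c * φ a ∂μ := by
      apply integral_congr_ae
      filter_upwards [hc, MemLp.coeFn_toLp (cont_memLp (μ := μ) hφ)] with a h1 h2
      rw [h1, h2]; simp [mul_comm]
    rw [this, integral_const_mul, hint, mul_zero]
  rw [hz] at hT
  have hT' := hT.norm
  simp only [ZeroMemClass.coe_zero, norm_zero] at hT'
  refine squeeze_zero (fun n => integral_nonneg fun x => abs_nonneg _) (fun n => ?_) hT'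
  have hc : Continuous (fun x => (n : ℝ)⁻¹ * birkhoffSum f φ n x) :=
    continuous_const.mul (cont_bs hf hφ n)
  have : birkhoffAverage ℝ U _root_.id n u = (cont_memLp (μ := μ) hc).toLp := by
    rw [birkhoffAverage, bs_toLp hf hφ hmp, ← MemLp.toLp_const_smul]; rfl
  rw [this, Lp.norm_toLp]
  have h1 : ∫ x, |(n : ℝ)⁻¹ * birkhoffSum f φ n x| ∂μ
      = (eLpNorm (fun x => (n : ℝ)⁻¹ * birkhoffSum f φ n x) 1 μ).toReal := by
    rw [eLpNorm_one_eq_lintegral_enorm, ← integral_norm_eq_lintegral_enorm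
      hc.aestronglyMeasurable]; rfl
  rw [h1]
  exact ENNReal.toReal_mono (cont_memLp hc).eLpNorm_ne_top
    (eLpNorm_le_eLpNorm_of_exponent_le (by norm_num) hc.aestronglyMeasurable)

lemma null_bad {f : X → X} (hf : Continuous f) {φ : X → ℝ} (hφ : Continuous φ)
    {μ : Measure X} [IsProbabilityMeasure μ] (hμ : Ergodic f μ)
    (hint : ∫ x, φ x ∂μ = 0) (A : Set X) (hA : MeasurableSet A) (N : ℕ) (hN : 0 < N)
    (ε : ℝ) (hε : 0 < ε) :
    ∀ᵐ x ∂μ, x ∈ A → ∃ n, N ≤ n ∧ f^[n] x ∈ A ∧ |birkhoffSum f φ n x| < ε := by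
  classical
  set B : Set X := A ∩ ⋂ n : ℕ, ⋂ _ : N ≤ n,
    ((f^[n] ⁻¹' A) ∩ {x | |birkhoffSum f φ n x| < ε})ᶜ with hB
  have hBm : MeasurableSet B := by
    refine hA.inter (MeasurableSet.iInter fun n => MeasurableSet.iInter fun _ => ?_)
    refine (((hf.iterate n).measurable hA).inter ?_).compl
    exact measurableSet_lt (cont_bs hf hφ n).abs.measurable measurable_const
  have hBsep : ∀ x, ∀ i j, f^[i] x ∈ B → f^[j] x ∈ B → i + N ≤ j →
      ε ≤ |birkhoffSum f φ j x - birkhoffSum f φ i x| := by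
    intro x i j hi hj hij
    obtain ⟨d, rfl⟩ := Nat.exists_eq_add_of_le (show i ≤ j by omega)
    have h1 := Set.mem_iInter₂.1 hi.2 d (by omega)
    rw [birkhoffSum_add, add_sub_cancel_left]
    by_contra! h
    refine h1 ⟨?_, h⟩
    change f^[d] (f^[i] x) ∈ A
    rw [← Function.iterate_add_apply, add_comm]
    exact hj.1
  suffices hb : μ.real B ≤ 0 by
    have h0 : μ B = 0 := (measureReal_eq_zero_iff (by finiteness)).1 (le_antisymm hb measureReal_nonneg)
    filter_upwards [measure_eq_zero_iff_ae_notMem.1 h0] with x hx hxA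
    by_contra! h
    refine hx ⟨hxA, Set.mem_iInter₂.2 fun n hn hh => ?_⟩
    exact absurd hh.2 (not_lt.2 (h n hn hh.1))
  set c : ℕ → ℝ := fun n => ∫ x, |(n : ℝ)⁻¹ * birkhoffSum f φ n x| ∂μ with hcdef
  have hc0 : ∀ n, 0 ≤ c n := fun n => integral_nonneg fun x => abs_nonneg _
  have hces := (l1_tendsto hf hφ hμ hint).cesaro
  -- key inequality
  have key : ∀ δ : ℝ, 0 < δ → ∀ n : ℕ, 0 < n →
      μ.real B ≤ N * (2 * δ / ε + 2 * (n : ℝ)⁻¹) + δ⁻¹ * ((n : ℝ)⁻¹ * ∑ i ∈ Finset.range n, c i) := by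
    intro δ hδ n hn
    have hn' : (0 : ℝ) < n := by exact_mod_cast hn
    set M : ℝ := δ * n with hM
    have hMpos : 0 < M := by positivity
    let G : ℕ → Set X := fun i => (f^[i] ⁻¹' B) ∩ {x | |birkhoffSum f φ i x| ≤ M}
    have hGm : ∀ i, MeasurableSet (G i) := fun i =>
      ((hf.iterate i).measurable hBm).inter
        (measurableSet_le (cont_bs hf hφ i).abs.measurable measurable_const)
    have hsplit : ∀ i ∈ Finset.range n, μ.real B ≤ μ.real (G i) + δ⁻¹ * c i := by
      intro i hi
      have hin : (i : ℝ) ≤ n := by exact_mod_cast (Finset.mem_range.1 hi).le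
      have e1 : μ.real B = μ.real (f^[i] ⁻¹' B) :=
        ((hμ.toMeasurePreserving.iterate i).measureReal_preimage hBm.nullMeasurableSet).symm
      have e2 : μ.real (f^[i] ⁻¹' B) ≤ μ.real (G i) + μ.real {x | M ≤ |birkhoffSum f φ i x|} := by
        refine (measureReal_mono ?_).trans (measureReal_union_le _ _)
        intro x hx
        rcases le_total (|birkhoffSum f φ i x|) M with h | h
        · exact Or.inl ⟨hx, h⟩
        · exact Or.inr h
      have e3 : M * μ.real {x | M ≤ |birkhoffSum f φ i x|} ≤ ∫ x, |birkhoffSum f φ i x| ∂μ := by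
        apply mul_meas_ge_le_integral_of_nonneg (Eventually.of_forall fun x => abs_nonneg _)
        exact (cont_bs hf hφ i).abs.integrable_of_hasCompactSupport
          (HasCompactSupport.of_compactSpace _)
      have e4 : ∫ x, |birkhoffSum f φ i x| ∂μ = i * c i := by
        rcases Nat.eq_zero_or_pos i with rfl | hpos
        · simp
        · have : (0 : ℝ) < i := by exact_mod_cast hpos
          rw [hcdef, ← integral_const_mul]
          congr 1; ext x
          rw [abs_mul, abs_of_pos (inv_pos.2 this), ← mul_assoc, mul_inv_cancel₀ this.ne', one_mul]
      have e5 : μ.real {x | M ≤ |birkhoffSum f φ i x|} ≤ δ⁻¹ * c i := by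
        have : M * μ.real {x | M ≤ |birkhoffSum f φ i x|} ≤ M * (δ⁻¹ * c i) := by
          calc _ ≤ _ := e3
            _ = i * c i := e4
            _ ≤ n * c i := by have := hc0 i; gcongr
            _ = _ := by rw [hM]; field_simp
        exact le_of_mul_le_mul_left this hMpos
      linarith
    have hsum := Finset.sum_le_sum hsplit
    rw [Finset.sum_const, Finset.card_range, nsmul_eq_mul, Finset.sum_add_distrib,
      ← Finset.mul_sum] at hsum
    have hGsum : ∑ i ∈ Finset.range n, μ.real (G i) ≤ N * (2 * M / ε + 2) := by
      have : ∑ i ∈ Finset.range n, μ.real (G i)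
          = ∫ x, ∑ i ∈ Finset.range n, (G i).indicator (fun _ => (1 : ℝ)) x ∂μ := by
        rw [integral_finsetSum _ fun i _ => (integrable_const (1 : ℝ)).indicator (hGm i)]
        refine Finset.sum_congr rfl fun i _ => ?_
        rw [integral_indicator_const _ (hGm i)]; simp
      rw [this]
      have hle : ∫ x, ∑ i ∈ Finset.range n, (G i).indicator (fun _ => (1 : ℝ)) x ∂μ
          ≤ ∫ _x, N * (2 * M / ε + 2) ∂μ := by
        refine integral_mono (integrable_finsetSum _ fun i _ =>
          (integrable_const (1 : ℝ)).indicator (hGm i)) (integrable_const _) fun x => ?_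
        have : ∑ i ∈ Finset.range n, (G i).indicator (fun _ => (1 : ℝ)) x
            = (((Finset.range n).filter fun i => x ∈ G i).card : ℝ) := by
          rw [Finset.card_filter, Nat.cast_sum]
          refine Finset.sum_congr rfl fun i _ => ?_
          by_cases h : x ∈ G i <;> simp [h]
        simp only [this]
        refine count_bound N hN ε M hε hMpos.le _ (fun i => birkhoffSum f φ i x) ?_ ?_
        · intro i hi; exact (Finset.mem_filter.1 hi).2.2
        · intro i hi j hj hij
          exact hBsep x i j (Finset.mem_filter.1 hi).2.1 (Finset.mem_filter.1 hj).2.1 hij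
      simpa using hle
    have h6 : n * μ.real B ≤ n * (N * (2 * δ / ε + 2 * (n : ℝ)⁻¹)
        + δ⁻¹ * ((n : ℝ)⁻¹ * ∑ i ∈ Finset.range n, c i)) := by
      refine (hsum.trans (add_le_add_left hGsum _)).trans (le_of_eq ?_)
      rw [hM]; field_simp
    exact le_of_mul_le_mul_left h6 hn'
  have key2 : ∀ δ : ℝ, 0 < δ → μ.real B ≤ N * (2 * δ / ε) := by
    intro δ hδ
    have hlim : Tendsto (fun n : ℕ => N * (2 * δ / ε + 2 * (n : ℝ)⁻¹)
        + δ⁻¹ * ((n : ℝ)⁻¹ * ∑ i ∈ Finset.range n, c i)) atTop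
        (𝓝 (N * (2 * δ / ε + 2 * 0) + δ⁻¹ * 0)) :=
      (((tendsto_inv_atTop_nhds_zero_nat (𝕜 := ℝ)).const_mul 2 |>.const_add _).const_mul _).add
        (hces.const_mul _)
    have := ge_of_tendsto hlim ((eventually_gt_atTop 0).mono fun n hn => key δ hδ n hn)
    simpa using this
  have hlim : Tendsto (fun δ : ℝ => N * (2 * δ / ε)) (𝓝[>] 0) (𝓝 (N * (2 * 0 / ε))) := by
    apply Tendsto.mono_left _ nhdsWithin_le_nhds
    exact (by fun_prop : Continuous fun δ : ℝ => N * (2 * δ / ε)).tendsto 0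
  have := ge_of_tendsto hlim (eventually_mem_nhdsWithin.mono fun δ hδ => key2 δ hδ)
  simpa using this

end

/-- Atkinson's lemma. If `μ` is an ergodic invariant measure for a
continuous map `f` of a compact metric space and `∫ φ dμ = 0`, then for `μ`-a.e. `x`
there are times `n_k → ∞` with `f^[n_k] x → x` and `S_{n_k} f (x) → 0`. -/
theorem atkinson_returns
    {X : Type*} [MetricSpace X] [CompactSpace X]
    [MeasurableSpace X] [BorelSpace X]
    (f : X → X) (hf : Continuous f) (φ : X → ℝ) (hφ : Continuous φ)
    (μ : Measure X) [IsProbabilityMeasure μ] (hμ : Ergodic f μ)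
    (hint : ∫ x, φ x ∂μ = 0) :
    ∀ᵐ x ∂μ, ∃ n : ℕ → ℕ, Tendsto n atTop atTop ∧
      Tendsto (fun k => f^[n k] x) atTop (𝓝 x) ∧
      Tendsto (fun k => birkhoffSum f φ (n k) x) atTop (𝓝 0) := by
  have hall : ∀ᵐ x ∂μ, ∀ U ∈ TopologicalSpace.countableBasis X, ∀ N m : ℕ, x ∈ U →
      ∃ n, N + 1 ≤ n ∧ f^[n] x ∈ U ∧ |birkhoffSum f φ n x| < 1 / ((m : ℝ) + 1) := by
    rw [ae_ball_iff (TopologicalSpace.countable_countableBasis X)]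
    intro U hU
    rw [ae_all_iff]; intro N
    rw [ae_all_iff]; intro m
    exact null_bad hf hφ hμ hint U (TopologicalSpace.isOpen_of_mem_countableBasis hU).measurableSet
      (N + 1) N.succ_pos _ (by positivity)
  filter_upwards [hall] with x hx
  have hcl : MapClusterPt (x, (0 : ℝ)) atTop
      (fun n : ℕ => (f^[n] x, birkhoffSum f φ n x)) := by
    rw [mapClusterPt_iff_frequently]
    intro s hs
    obtain ⟨V, hV, W, hW, hVW⟩ := mem_nhds_prod_iff.1 hs
    obtain ⟨U, hU, hxU, hUV⟩ :=
      (TopologicalSpace.isBasis_countableBasis X).mem_nhds_iff.1 hV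
    obtain ⟨r, hr, hrW⟩ := Metric.mem_nhds_iff.1 hW
    obtain ⟨m, hm⟩ := exists_nat_one_div_lt hr
    rw [frequently_atTop]
    intro N
    obtain ⟨n, hn, hnU, hns⟩ := hx U hU N m hxU
    refine ⟨n, by omega, hVW ⟨hUV hnU, hrW ?_⟩⟩
    rw [Metric.mem_ball, Real.dist_eq, sub_zero]
    exact hns.trans hm
  obtain ⟨ψ, hψ, hlim⟩ := hcl.tendsto_subseq
  rw [nhds_prod_eq] at hlim
  exact ⟨ψ, hψ.tendsto_atTop, hlim.fst, hlim.snd⟩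
end

section
/- Let X be a compact metric space, f : X → X continuous, φ : X → ℝ continuous, and let μ be an ergodic f-invariant Borel probability measure with ∫ φ dμ = 0. Then for every x in the topological support of μ and every ε > 0 there exist y ∈ B_ε(x) and an integer n > 0 such that fⁿ(y) ∈ B_ε(x) and S_n f(y) ≥ 0. -/
open MeasureTheory Metric

lemma clamp_sub_le {a b C M : ℝ} (hC : 0 ≤ C) (h : b - a ≤ C) :
    max (-M) (min M b) - max (-M) (min M a) ≤ C := by
  rcases max_cases (-M) (min M b) with h1 | h1 <;> rcases max_cases (-M) (min M a) with h2 | h2 <;>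
  rcases min_cases M b with h3 | h3 <;> rcases min_cases M a with h4 | h4 <;> linarith

lemma clamp_tendsto (a : ℝ) :
    Filter.Tendsto (fun M : ℕ => max (-(M : ℝ)) (min (M : ℝ) a)) Filter.atTop (nhds a) := by
  obtain ⟨N, hN⟩ := exists_nat_ge |a|
  apply tendsto_const_nhds.congr'
  filter_upwards [Filter.eventually_ge_atTop N] with M hM
  have : |a| ≤ (M : ℝ) := hN.trans (by exact_mod_cast hM)
  rw [abs_le] at this
  rw [min_eq_right this.2, max_eq_right this.1]

/-- Fatou estimate for a coboundary bounded above. -/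
lemma coboundary_fatou {X : Type*} [MeasurableSpace X] (f : X → X) (μ : Measure X)
    [IsProbabilityMeasure μ] (hf : MeasurePreserving f μ μ) (h : X → ℝ) (hh : Measurable h)
    (C : ℝ) (hC : 0 ≤ C) (hb : ∀ᵐ x ∂μ, h (f x) - h x ≤ C) :
    ∫⁻ x, ENNReal.ofReal (C + (h x - h (f x))) ∂μ ≤ ENNReal.ofReal C := by
  let c : ℕ → X → ℝ := fun M x => max (-(M : ℝ)) (min (M : ℝ) (h x))
  have hc : ∀ M, Measurable (c M) := fun M => by fun_prop
  have hci : ∀ M, Integrable (c M) μ := fun M => by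
    refine Integrable.of_bound (hc M).aestronglyMeasurable (M : ℝ) (Filter.Eventually.of_forall ?_)
    intro x
    have : (0 : ℝ) ≤ M := Nat.cast_nonneg M
    rw [Real.norm_eq_abs, abs_le]
    exact ⟨le_max_left _ _, max_le (by linarith) (min_le_left _ _)⟩
  have hcf : ∀ M, Integrable (fun x => c M (f x)) μ := fun M =>
    hf.integrable_comp_of_integrable (hci M)
  have heq : ∀ M, ∫ x, c M (f x) ∂μ = ∫ x, c M x ∂μ := fun M => by
    rw [← integral_map hf.measurable.aemeasurable (hc M).aestronglyMeasurable, hf.map_eq]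
  have hl : ∀ M, ∫⁻ x, ENNReal.ofReal (C + (c M x - c M (f x))) ∂μ = ENNReal.ofReal C := fun M => by
    have hi : Integrable (fun x => c M x - c M (f x)) μ := (hci M).sub (hcf M)
    rw [← ofReal_integral_eq_lintegral_ofReal (f := fun x => C + (c M x - c M (f x))) ((integrable_const C).add hi)]
    · rw [integral_add (integrable_const C) hi, integral_sub (hci M) (hcf M), heq]
      simp
    · filter_upwards [hb] with x hx
      have := clamp_sub_le (M := (M : ℝ)) hC hx
      simp only [Pi.zero_apply, c]
      linarith
  have hfat := lintegral_liminf_le (μ := μ) (u := Filter.atTop)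
    (f := fun (M : ℕ) x => ENNReal.ofReal (C + (c M x - c M (f x)))) (fun M => by
      have := hf.measurable
      have := hc M
      fun_prop)
  simp only [hl, Filter.liminf_const] at hfat
  refine le_trans (le_of_eq ?_) hfat
  refine lintegral_congr fun x => ?_
  refine (Filter.Tendsto.liminf_eq ?_).symm
  exact ENNReal.tendsto_ofReal (((clamp_tendsto (h x)).sub (clamp_tendsto (h (f x)))).const_add C)

/-- If `μ` is ergodic with `∫ φ dμ = 0`, then near any point `x` of the
topological support of `μ` (i.e. every ball around `x` has positive measure) and any
`ε > 0`, there are `y ∈ B_ε(x)` and `n > 0` with `f^[n] y ∈ B_ε(x)` and `S_n f (y) ≥ 0`. -/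
theorem support_point_nonneg_return
    {X : Type*} [MetricSpace X] [CompactSpace X]
    [MeasurableSpace X] [BorelSpace X]
    (f : X → X) (hf : Continuous f) (φ : X → ℝ) (hφ : Continuous φ)
    (μ : Measure X) [IsProbabilityMeasure μ] (hμ : Ergodic f μ)
    (hint : ∫ x, φ x ∂μ = 0)
    (x : X) (hx : ∀ ε > 0, 0 < μ (ball x ε)) :
    ∀ ε > 0, ∃ y ∈ ball x ε, ∃ n : ℕ, 0 < n ∧
      f^[n] y ∈ ball x ε ∧ 0 ≤ birkhoffSum f φ n y := by
  classical
  intro ε hε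
  by_contra! hcon
  have hA0 := hx ε hε
  have hAm : MeasurableSet (ball x ε) := measurableSet_ball
  generalize ball x ε = A at *
  have hfn : ∀ n, Measurable (f^[n]) := fun n => (hf.iterate n).measurable
  let B : Set X := ⋃ n : ℕ, f^[n] ⁻¹' A
  have hBm : MeasurableSet B := MeasurableSet.iUnion fun n => hfn n hAm
  have hAB : A ⊆ B := fun y hy => Set.mem_iUnion.2 ⟨0, hy⟩
  have hBf : f ⁻¹' B ⊆ B := by
    intro y hy
    obtain ⟨n, hn⟩ := Set.mem_iUnion.1 hy
    exact Set.mem_iUnion.2 ⟨n + 1, by simpa using hn⟩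
  have hB : ∀ᵐ y ∂μ, y ∈ B := by
    rcases hμ.ae_empty_or_univ_of_preimage_ae_le hBm.nullMeasurableSet
      (LE.le.eventuallyLE hBf) with h | h
    · exfalso
      have h0 : μ B = 0 := by rw [measure_congr h]; simp
      exact hA0.ne' (measure_mono_null hAB h0)
    · filter_upwards [h] with y hy
      have hy' : (y ∈ B) = (y ∈ (Set.univ : Set X)) := hy
      rw [hy']; trivial
  have hfB : ∀ᵐ y ∂μ, f y ∈ B := hμ.toMeasurePreserving.quasiMeasurePreserving.ae hB
  let p : ℕ → X → Prop := fun n y => f^[n] y ∈ A ∨ y ∉ B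
  have hp : ∀ y, ∃ n, p n y := by
    intro y
    by_cases hy : y ∈ B
    · obtain ⟨n, hn⟩ := Set.mem_iUnion.1 hy
      exact ⟨n, Or.inl hn⟩
    · exact ⟨0, Or.inr hy⟩
  have hS : ∀ n, Measurable (birkhoffSum f φ n) := fun n => by
    unfold birkhoffSum
    exact Finset.measurable_fun_sum _ fun i _ => hφ.measurable.comp (hfn i)
  let h : X → ℝ := fun y => birkhoffSum f φ (Nat.find (hp y)) y
  have hh : Measurable h :=
    Measurable.find (p := p) hS (fun n => (hfn n hAm).union hBm.compl) hp
  have hle : ∀ y, y ∈ B → f y ∈ B → φ y ≤ h y - h (f y) ∧ (y ∈ A → φ y < h y - h (f y)) := by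
    intro y hy hfy
    have hspec : f^[Nat.find (hp (f y))] (f y) ∈ A :=
      (Nat.find_spec (hp (f y))).resolve_right (fun h => h hfy)
    have hsucc : birkhoffSum f φ (Nat.find (hp (f y)) + 1) y = φ y + h (f y) :=
      birkhoffSum_succ' _ _ _ _
    by_cases hyA : y ∈ A
    · have h0 : h y = 0 := by
        have : Nat.find (hp y) = 0 := (Nat.find_eq_zero _).2 (Or.inl hyA)
        simp only [h, this, birkhoffSum_zero]
      have := hcon y hyA (Nat.find (hp (f y)) + 1) (Nat.succ_pos _) (by simpa using hspec)
      rw [hsucc] at this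
      exact ⟨by linarith, fun _ => by linarith⟩
    · have : Nat.find (hp y) = Nat.find (hp (f y)) + 1 := by
        rw [Nat.find_eq_iff]
        refine ⟨Or.inl (by simpa using hspec), ?_⟩
        rintro (_ | n) hn (h1 | h1)
        · exact hyA h1
        · exact h1 hy
        · exact Nat.find_min (hp (f y)) (by omega : n < _) (Or.inl (by simpa using h1))
        · exact h1 hy
      have h2 : h y = φ y + h (f y) := by rw [← hsucc, ← this]
      exact ⟨by linarith, fun h => absurd h hyA⟩
  obtain ⟨C, hC⟩ := isCompact_univ.exists_bound_of_continuousOn hφ.continuousOn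
  have hC' : ∀ y, |φ y| ≤ C := fun y => hC y trivial
  have hC0 : 0 ≤ C := (abs_nonneg _).trans (hC' x)
  have key := coboundary_fatou f μ hμ.toMeasurePreserving h hh C hC0 (by
    filter_upwards [hB, hfB] with y h1 h2
    have := (hle y h1 h2).1
    have := (abs_le.1 (hC' y)).1
    linarith)
  have hφi : Integrable φ μ :=
    Integrable.of_bound hφ.measurable.aestronglyMeasurable C (Filter.Eventually.of_forall hC')
  have hφl : ∫⁻ y, ENNReal.ofReal (C + φ y) ∂μ = ENNReal.ofReal C := by
    rw [← ofReal_integral_eq_lintegral_ofReal (f := fun y => C + φ y) ((integrable_const C).add hφi)]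
    · rw [integral_add (integrable_const C) hφi, hint]
      simp
    · refine Filter.Eventually.of_forall fun y => ?_
      have := (abs_le.1 (hC' y)).1
      simp only [Pi.zero_apply]
      linarith
  have hae := ae_eq_of_ae_le_of_lintegral_le (μ := μ)
    (f := fun y => ENNReal.ofReal (C + φ y))
    (g := fun y => ENNReal.ofReal (C + (h y - h (f y))))
    (by
      filter_upwards [hB, hfB] with y h1 h2
      have := (hle y h1 h2).1
      exact ENNReal.ofReal_le_ofReal (by linarith))
    (by rw [hφl]; exact ENNReal.ofReal_ne_top)
    (by
      have := hf.measurable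
      fun_prop)
    (by rw [hφl]; exact key)
  have hnA : ∀ᵐ y ∂μ, y ∉ A := by
    filter_upwards [hB, hfB, hae] with y h1 h2 h3 hyA
    have h4 := (hle y h1 h2).2 hyA
    have h5 := (abs_le.1 (hC' y)).1
    rw [ENNReal.ofReal_eq_ofReal_iff (by linarith) (by linarith)] at h3
    linarith
  exact hA0.ne' (measure_eq_zero_iff_ae_notMem.2 hnA)
end

section
/- Let X be a nonempty compact metric space, f : X → X continuous, and φ : X → ℝ continuous. Then limsup_{n→∞} max_{x∈X} (1/n) S_n f(x) = sup_{μ ∈ M_inv(f)} ∫ φ dμ. -/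
open MeasureTheory Filter

theorem aux_empirical {X : Type*} [MetricSpace X] [CompactSpace X]
    [MeasurableSpace X] [BorelSpace X] (f : X → X) (x : X) (n : ℕ) :
    ∃ ν : ProbabilityMeasure X, 0 < n → ∀ g : X → ℝ, Continuous g →
      ∫ y, g y ∂(ν : Measure X) = birkhoffSum f g n x / n := by
  rcases Nat.eq_zero_or_pos n with rfl | hn
  · exact ⟨⟨Measure.dirac x, inferInstance⟩, fun h => absurd h (lt_irrefl _)⟩
  · have hn0 : (n : ENNReal) ≠ 0 := by exact_mod_cast hn.ne'
    refine ⟨⟨(n : ENNReal)⁻¹ • ∑ i ∈ Finset.range n, Measure.dirac (f^[i] x), ⟨?_⟩⟩,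
      fun _ g hg => ?_⟩
    · simp [Measure.finsetSum_apply, ENNReal.inv_mul_cancel hn0 (ENNReal.natCast_ne_top n)]
    · change ∫ y, g y ∂((n : ENNReal)⁻¹ • ∑ i ∈ Finset.range n, Measure.dirac (f^[i] x)) = _
      rw [integral_smul_measure, integral_finsetSum_measure]
      · simp [birkhoffSum, div_eq_inv_mul]
      · intro i _
        exact integrable_dirac (by simp)

theorem aux_exists {X : Type*} [MetricSpace X] [CompactSpace X]
    [MeasurableSpace X] [BorelSpace X]
    (f : X → X) (hf : Continuous f) (φ : X → ℝ) (hφ : Continuous φ) (c : ℝ)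
    (h : ∃ᶠ n : ℕ in atTop, ∃ x : X, c ≤ birkhoffSum f φ n x / n) :
    ∃ μ : Measure X, (IsProbabilityMeasure μ ∧ μ.map f = μ) ∧ c ≤ ∫ x, φ x ∂μ := by
  obtain ⟨n0, x0, -⟩ := h.exists
  have hx : ∀ n : ℕ, ∃ x : X, (∃ x : X, c ≤ birkhoffSum f φ n x / n) →
      c ≤ birkhoffSum f φ n x / n := by
    intro n
    by_cases hh : ∃ x : X, c ≤ birkhoffSum f φ n x / n
    · exact ⟨hh.choose, fun _ => hh.choose_spec⟩
    · exact ⟨x0, fun h => absurd h hh⟩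
  choose x hx using hx
  choose ν hν using fun n => aux_empirical f (x n) n
  have : NeBot (atTop ⊓ 𝓟 {n : ℕ | c ≤ birkhoffSum f φ n (x n) / n}) := by
    rw [← frequently_iff_neBot]
    exact h.mono hx
  obtain ⟨U, hU⟩ := Ultrafilter.exists_le (atTop ⊓ 𝓟 {n : ℕ | c ≤ birkhoffSum f φ n (x n) / n})
  have hU1 : (U : Filter ℕ) ≤ atTop := hU.trans inf_le_left
  have hU2 : ∀ᶠ n in (U : Filter ℕ), c ≤ birkhoffSum f φ n (x n) / n :=
    (hU.trans inf_le_right) (mem_principal_self _)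
  have hpos : ∀ᶠ n in (U : Filter ℕ), 0 < n := hU1 (eventually_gt_atTop 0)
  obtain ⟨μ, -, hμ⟩ := isCompact_univ.ultrafilter_le_nhds (U.map ν) (by simp)
  have hT : Tendsto ν U (nhds μ) := hμ
  rw [ProbabilityMeasure.tendsto_iff_forall_integral_tendsto] at hT
  have hT' : ∀ g : X → ℝ, Continuous g →
      Tendsto (fun n : ℕ => birkhoffSum f g n (x n) / n) U (nhds (∫ y, g y ∂(μ : Measure X))) := by
    intro g hg
    refine (hT (BoundedContinuousFunction.mkOfCompact ⟨g, hg⟩)).congr' ?_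
    filter_upwards [hpos] with n hn
    exact hν n hn g hg
  refine ⟨μ, ⟨inferInstance, ?_⟩, ge_of_tendsto (hT' φ hφ) hU2⟩
  have := Measure.isProbabilityMeasure_map (μ := (μ : Measure X)) hf.measurable.aemeasurable
  refine ext_of_forall_integral_eq_of_IsFiniteMeasure fun g => ?_
  rw [integral_map hf.measurable.aemeasurable g.continuous.aestronglyMeasurable]
  have h1 := (hT' (fun y => g (f y)) (g.continuous.comp hf)).sub (hT' g g.continuous)
  have h2 : Tendsto (fun n : ℕ => birkhoffSum f (fun y => g (f y)) n (x n) / n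
      - birkhoffSum f g n (x n) / n) U (nhds 0) := by
    have h3 : Tendsto (fun n : ℕ => 2 * ‖g‖ / (n : ℝ)) U (nhds 0) :=
      (tendsto_const_div_atTop_nhds_zero_nat _).mono_left hU1
    refine squeeze_zero_norm (fun n => ?_) h3
    have : birkhoffSum f (fun y => g (f y)) n (x n) = birkhoffSum f g n (f (x n)) := by
      simp only [birkhoffSum, ← Function.iterate_succ_apply, ← Function.iterate_succ_apply']
    rw [this, ← sub_div, birkhoffSum_apply_sub_birkhoffSum, norm_div, Real.norm_natCast]
    gcongr
    rw [← dist_eq_norm]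
    exact g.dist_le_two_norm _ _
  exact sub_eq_zero.1 (tendsto_nhds_unique h1 h2)

/-- For a continuous map `f` of a nonempty compact metric space and a
continuous `φ`, `limsup_n max_x (1/n) S_n f (x) = sup { ∫ φ dμ : μ ∈ M_inv(f) }`. -/
theorem limsup_max_birkhoff_eq_sup_invariant
    {X : Type*} [MetricSpace X] [CompactSpace X] [Nonempty X]
    [MeasurableSpace X] [BorelSpace X]
    (f : X → X) (hf : Continuous f) (φ : X → ℝ) (hφ : Continuous φ) :
    limsup (fun n : ℕ => ⨆ x : X, birkhoffSum f φ n x / n) atTop =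
      ⨆ μ : {μ : Measure X // IsProbabilityMeasure μ ∧ μ.map f = μ},
        ∫ x, φ x ∂(μ : Measure X) := by
  obtain ⟨C, hC⟩ : ∃ C, ∀ x, ‖φ x‖ ≤ C := by
    obtain ⟨C, hC⟩ := isCompact_univ.exists_bound_of_continuousOn hφ.continuousOn
    exact ⟨C, fun x => hC x trivial⟩
  have hC0 : 0 ≤ C := (norm_nonneg _).trans (hC (Classical.arbitrary X))
  have hb : ∀ (n : ℕ) x, |birkhoffSum f φ n x / n| ≤ C := by
    intro n x
    rw [abs_div, Nat.abs_cast]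
    refine div_le_of_le_mul₀ (by positivity) hC0 ?_
    calc |birkhoffSum f φ n x| ≤ ∑ i ∈ Finset.range n, |φ (f^[i] x)| :=
          Finset.abs_sum_le_sum_abs _ _
      _ ≤ ∑ i ∈ Finset.range n, C := Finset.sum_le_sum fun i _ => hC _
      _ = C * n := by simp [mul_comm]
  have hbdd : ∀ n : ℕ, BddAbove (Set.range fun x => birkhoffSum f φ n x / n) := by
    intro n
    exact ⟨C, by rintro _ ⟨x, rfl⟩; exact (abs_le.1 (hb n x)).2⟩
  have hup : ∀ n : ℕ, ⨆ x : X, birkhoffSum f φ n x / n ≤ C :=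
    fun n => ciSup_le fun x => (abs_le.1 (hb n x)).2
  have hlo : ∀ n : ℕ, -C ≤ ⨆ x : X, birkhoffSum f φ n x / n :=
    fun n => (abs_le.1 (hb n (Classical.arbitrary X))).1.trans (le_ciSup (hbdd n) _)
  have hBU : IsBoundedUnder (· ≤ ·) atTop (fun n : ℕ => ⨆ x : X, birkhoffSum f φ n x / n) :=
    isBoundedUnder_of ⟨C, hup⟩
  have hBL : IsBoundedUnder (· ≥ ·) atTop (fun n : ℕ => ⨆ x : X, birkhoffSum f φ n x / n) :=
    isBoundedUnder_of ⟨-C, hlo⟩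
  -- invariant measures are bounded by every maximum
  have key : ∀ μ : {μ : Measure X // IsProbabilityMeasure μ ∧ μ.map f = μ}, ∀ n : ℕ, 0 < n →
      ∫ x, φ x ∂(μ : Measure X) ≤ ⨆ x : X, birkhoffSum f φ n x / n := by
    rintro ⟨μ, hμ, hinv⟩ n hn
    have hmp : MeasurePreserving f μ μ := ⟨hf.measurable, hinv⟩
    have hint : ∀ i : ℕ, Integrable (fun x => φ (f^[i] x)) μ := fun i =>
      Integrable.of_bound (hφ.comp (hf.iterate i)).aestronglyMeasurable C
        (Eventually.of_forall fun x => hC _)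
    have heq : ∀ i : ℕ, ∫ x, φ (f^[i] x) ∂μ = ∫ x, φ x ∂μ := by
      intro i
      have h := (hmp.iterate i)
      conv_rhs => rw [← h.map_eq]
      rw [integral_map h.measurable.aemeasurable hφ.aestronglyMeasurable]
    have hS : ∫ x, birkhoffSum f φ n x / n ∂μ = ∫ x, φ x ∂μ := by
      simp only [birkhoffSum]
      rw [integral_div, integral_finsetSum _ fun i _ => hint i]
      simp only [heq, Finset.sum_const, Finset.card_range, nsmul_eq_mul]
      field_simp
    have hI : Integrable (fun x => birkhoffSum f φ n x / n) μ := by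
      simp only [birkhoffSum]
      exact (integrable_finsetSum _ fun i _ => hint i).div_const _
    change ∫ x, φ x ∂μ ≤ _
    rw [← hS]
    refine (integral_mono hI (integrable_const _) fun x => le_ciSup (hbdd n) x).trans ?_
    simp
  have hbM : BddAbove (Set.range fun μ : {μ : Measure X // IsProbabilityMeasure μ ∧ μ.map f = μ} =>
      ∫ x, φ x ∂(μ : Measure X)) :=
    ⟨C, by rintro _ ⟨μ, rfl⟩; exact (key μ 1 one_pos).trans (hup 1)⟩
  have low : ∀ c < limsup (fun n : ℕ => ⨆ x : X, birkhoffSum f φ n x / n) atTop,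
      ∃ μ : Measure X, (IsProbabilityMeasure μ ∧ μ.map f = μ) ∧ c ≤ ∫ x, φ x ∂μ := by
    intro c hc
    refine aux_exists f hf φ hφ c ?_
    refine (frequently_lt_of_lt_limsup hBL.isCoboundedUnder_le hc).mono fun n hn => ?_
    obtain ⟨x, hx⟩ := exists_lt_of_lt_ciSup hn
    exact ⟨x, hx.le⟩
  apply le_antisymm
  · refine le_of_forall_lt_imp_le_of_dense fun c hc => ?_
    obtain ⟨μ, h1, h2⟩ := low c hc
    exact h2.trans (le_ciSup hbM ⟨μ, h1⟩)
  · obtain ⟨μ0, h0, -⟩ := low _ (sub_one_lt _)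
    have : Nonempty {μ : Measure X // IsProbabilityMeasure μ ∧ μ.map f = μ} := ⟨⟨μ0, h0⟩⟩
    refine ciSup_le fun μ => ?_
    refine le_limsup_of_frequently_le ?_ hBU
    exact ((eventually_gt_atTop 0).mono fun n hn => key μ n hn).frequently
end

section
/- Let X be a nonempty compact metric space, f : X → X continuous, and φ : X → ℝ continuous, and assume sup_{μ ∈ M_inv(f)} ∫ φ dμ = 0. Then for every constant a > 0 there exists a positive integer m₀ = m₀(a) such that for all m ≥ m₀ and all x ∈ X, (1/m) S_m f(x) ≤ a/2. -/
open MeasureTheory Filter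

/-- If the maximal ergodic average is `0`, then for every `a > 0` there
is `m₀ ≥ 1` such that all Birkhoff averages of length `m ≥ m₀` are at most `a / 2`. -/
theorem birkhoff_average_eventually_le
    {X : Type*} [MetricSpace X] [CompactSpace X] [Nonempty X]
    [MeasurableSpace X] [BorelSpace X]
    (f : X → X) (hf : Continuous f) (φ : X → ℝ) (hφ : Continuous φ)
    (hsup : (⨆ μ : {μ : Measure X // IsProbabilityMeasure μ ∧ μ.map f = μ},
        ∫ x, φ x ∂(μ : Measure X)) = 0)
    (a : ℝ) (ha : 0 < a) :
    ∃ m₀ : ℕ, 1 ≤ m₀ ∧ ∀ m : ℕ, m₀ ≤ m → ∀ x : X,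
      birkhoffSum f φ m x / m ≤ a / 2 := by
  by_contra! hcon
  have hcon' : ∀ k : ℕ, ∃ m : ℕ, k + 1 ≤ m ∧ ∃ x : X, a / 2 < birkhoffSum f φ m x / m :=
    fun k => hcon (k + 1) (by omega)
  choose m hm x hx using hcon'
  have hmpos : ∀ k, (0 : ℝ) < m k := fun k => by
    have := hm k
    exact_mod_cast (by omega : 0 < m k)
  have hmne : ∀ k, (m k : ENNReal) ≠ 0 := fun k => by
    have := hm k
    exact_mod_cast (by omega : m k ≠ 0)
  let ν : ℕ → ProbabilityMeasure X := fun k =>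
    ⟨(m k : ENNReal)⁻¹ • ∑ i ∈ Finset.range (m k), Measure.dirac (f^[i] (x k)), ⟨by
      simp [Measure.finsetSum_apply, ENNReal.inv_mul_cancel (hmne k) (ENNReal.natCast_ne_top _)]⟩⟩
  have hν : ∀ k, ∀ g : X → ℝ, Continuous g →
      ∫ y, g y ∂(ν k : Measure X) = birkhoffSum f g (m k) (x k) / m k := by
    intro k g hg
    have hint : ∀ i ∈ Finset.range (m k), Integrable g (Measure.dirac (f^[i] (x k))) :=
      fun i _ => hg.integrable_of_hasCompactSupport (HasCompactSupport.of_compactSpace g)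
    change ∫ y, g y ∂((m k : ENNReal)⁻¹ • ∑ i ∈ Finset.range (m k), Measure.dirac (f^[i] (x k))) = _
    rw [integral_smul_measure, integral_finsetSum_measure hint]
    simp [birkhoffSum, div_eq_inv_mul]
  let U : Ultrafilter ℕ := hyperfilter ℕ
  have hU : (U : Filter ℕ) ≤ atTop := Nat.hyperfilter_le_atTop
  obtain ⟨μ, -, hμ⟩ := isCompact_univ.ultrafilter_le_nhds (U.map ν) (by simp)
  have hμ' : Tendsto ν U (nhds μ) := hμ
  rw [ProbabilityMeasure.tendsto_iff_forall_integral_tendsto] at hμ'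
  have hlim : ∀ g : X → ℝ, Continuous g →
      Tendsto (fun k => birkhoffSum f g (m k) (x k) / m k) U (nhds (∫ y, g y ∂(μ : Measure X))) := by
    intro g hg
    have := hμ' (BoundedContinuousFunction.mkOfCompact ⟨g, hg⟩)
    refine this.congr fun k => ?_
    exact hν k g hg
  have hinv : (μ : Measure X).map f = μ := by
    have : IsProbabilityMeasure ((μ : Measure X).map f) :=
      Measure.isProbabilityMeasure_map hf.aemeasurable
    refine ext_of_forall_integral_eq_of_IsFiniteMeasure fun g => ?_
    rw [integral_map hf.aemeasurable g.continuous.aestronglyMeasurable]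
    have h1 := hlim (fun y => g (f y)) (g.continuous.comp hf)
    have h2 := hlim g g.continuous
    have h3 := h1.sub h2
    have h4 : Tendsto (fun k => birkhoffSum f (fun y => g (f y)) (m k) (x k) / m k
        - birkhoffSum f g (m k) (x k) / m k) U (nhds 0) := by
      refine Tendsto.mono_left ?_ hU
      have hb : Tendsto (fun k : ℕ => (2 * ‖g‖) / ((k : ℝ) + 1)) atTop (nhds 0) :=
        tendsto_const_nhds.div_atTop
          (tendsto_atTop_add_const_right _ _ tendsto_natCast_atTop_atTop)
      refine squeeze_zero_norm (fun k => ?_) hb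
      have e : birkhoffSum f (fun y => g (f y)) (m k) (x k) - birkhoffSum f g (m k) (x k)
          = g (f^[m k] (x k)) - g (x k) := by
        have := birkhoffSum_apply_sub_birkhoffSum f g (m k) (x k)
        rw [← this]
        simp [birkhoffSum, ← Function.iterate_succ_apply, Function.iterate_succ_apply']
      rw [← sub_div, e, norm_div]
      have h5 : ‖g (f^[m k] (x k)) - g (x k)‖ ≤ 2 * ‖g‖ := by
        have := norm_sub_le (g (f^[m k] (x k))) (g (x k))
        have := g.norm_coe_le_norm (f^[m k] (x k))
        have := g.norm_coe_le_norm (x k)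
        linarith
      have h6 : ((k : ℝ) + 1) ≤ ‖(m k : ℝ)‖ := by
        rw [Real.norm_of_nonneg (hmpos k).le]
        exact_mod_cast hm k
      gcongr
    exact sub_eq_zero.1 (tendsto_nhds_unique h3 h4)
  have hge : a / 2 ≤ ∫ y, φ y ∂(μ : Measure X) :=
    ge_of_tendsto' (hlim φ hφ) fun k => (hx k).le
  have hbdd : BddAbove (Set.range fun μ : {μ : Measure X // IsProbabilityMeasure μ ∧ μ.map f = μ} =>
      ∫ x, φ x ∂(μ : Measure X)) := by
    let Φ := BoundedContinuousFunction.mkOfCompact ⟨φ, hφ⟩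
    refine ⟨‖Φ‖, ?_⟩
    rintro _ ⟨⟨ρ, hρ, -⟩, rfl⟩
    have := Φ.norm_integral_le_norm ρ
    exact (le_abs_self _).trans this
  have := le_ciSup hbdd ⟨(μ : Measure X), inferInstance, hinv⟩
  rw [hsup] at this
  simp only at this
  linarith
end

section
/- Let X be a compact metric space, g : X → X continuous, φ : X → ℝ continuous, and B ⊆ X. Suppose: (i) for every z ∈ B and every n ≥ 1 with gⁿ(z) ∈ B one has S_n g(z) ≤ 0; (ii) for every z ∈ X whose forward g-orbit visits B only finitely many times, limsup_{n→∞} (1/n) S_n g(z) ≤ 0; (iii) there are x₀ ∈ B and n₁ ≥ 1 with g^{n₁}(x₀) = x₀ and S_{n₁} g(x₀) = 0. Then the measure μ₁ = (1/n₁) Σ_{i=0}^{n₁-1} δ_{gⁱ(x₀)}, uniformly distributed on the periodic orbit of x₀, is a φ-maximizing measure for g: ∫ φ dμ ≤ ∫ φ dμ₁ = 0 for every g-invariant Borel probability measure μ. -/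
open MeasureTheory Filter

theorem helper_uniform {X : Type*} [TopologicalSpace X] [CompactSpace X]
    (g : X → X) (hg : Continuous g) (ψ : X → ℝ) (hψ : Continuous ψ)
    (h : ∀ x, ∃ n : ℕ, 1 ≤ n ∧ birkhoffSum g ψ n x < 0) :
    ∃ M : X → ℝ, Continuous M ∧ ∀ x, ψ x ≤ M x - M (g x) := by
  have hc : ∀ n : ℕ, Continuous (birkhoffSum g ψ n) := by
    intro n
    unfold birkhoffSum
    exact continuous_finsetSum _ fun i _ => hψ.comp (hg.iterate i)
  obtain ⟨t, ht⟩ := isCompact_univ.elim_finite_subcover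
    (fun n : ℕ => {x : X | 1 ≤ n ∧ birkhoffSum g ψ n x < 0})
    (fun n => by
      by_cases hn : 1 ≤ n
      · simpa [hn] using isOpen_lt (hc n) continuous_const
      · simp [hn])
    (fun x _ => by
      obtain ⟨n, hn⟩ := h x
      exact Set.mem_iUnion.2 ⟨n, hn⟩)
  obtain ⟨N, hN⟩ : ∃ N : ℕ, ∀ n ∈ t, n < N := by
    refine ⟨t.sup id + 1, fun n hn => ?_⟩
    have : id n ≤ t.sup id := Finset.le_sup hn
    simp only [id] at this
    omega
  have hne : (Finset.range (N + 1)).Nonempty := ⟨0, by simp⟩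
  refine ⟨fun x => (Finset.range (N + 1)).inf' hne fun n => birkhoffSum g ψ n x,
    Continuous.finset_inf'_apply hne fun n _ => hc n, fun x => ?_⟩
  have key : ∀ n : ℕ, 1 ≤ n → n < N + 1 →
      ψ x + (Finset.range (N + 1)).inf' hne (fun n => birkhoffSum g ψ n (g x))
        ≤ birkhoffSum g ψ n x := by
    intro n hn hnN
    obtain ⟨k, rfl⟩ : ∃ k, n = k + 1 := ⟨n - 1, by omega⟩
    rw [birkhoffSum_succ']
    have := Finset.inf'_le (s := Finset.range (N + 1))
      (fun n => birkhoffSum g ψ n (g x)) (b := k) (by simp; omega)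
    linarith
  have : ψ x + (Finset.range (N + 1)).inf' hne (fun n => birkhoffSum g ψ n (g x))
      ≤ (Finset.range (N + 1)).inf' hne fun n => birkhoffSum g ψ n x := by
    refine Finset.le_inf' _ _ fun n hn => ?_
    rcases Nat.eq_zero_or_pos n with rfl | hpos
    · obtain ⟨m, hm⟩ := Set.mem_iUnion.1 (ht (Set.mem_univ x))
      obtain ⟨hmt, hm1, hm2⟩ := Set.mem_iUnion.1 hm
      have := key m hm1 (by have := hN m hmt; omega)
      rw [birkhoffSum_zero]
      linarith
    · exact key n hpos (Finset.mem_range.1 hn)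
  linarith

theorem helper_exists {X : Type*} [TopologicalSpace X] [CompactSpace X]
    (g : X → X) (φ : X → ℝ) (hφ : Continuous φ) (B : Set X)
    (hret : ∀ z ∈ B, ∀ n : ℕ, 1 ≤ n → g^[n] z ∈ B → birkhoffSum g φ n z ≤ 0)
    (hfin : ∀ z : X, {n : ℕ | g^[n] z ∈ B}.Finite →
      limsup (fun n : ℕ => birkhoffSum g φ n z / n) atTop ≤ 0)
    (ε : ℝ) (hε : 0 < ε) (x : X) :
    ∃ n : ℕ, 1 ≤ n ∧ birkhoffSum g φ n x < n * ε := by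
  by_cases hf : {n : ℕ | g^[n] x ∈ B}.Finite
  · obtain ⟨C, hC⟩ := isCompact_univ.exists_bound_of_continuousOn hφ.continuousOn
    have hb : IsBoundedUnder (· ≤ ·) atTop (fun n : ℕ => birkhoffSum g φ n x / n) := by
      refine isBoundedUnder_of_eventually_le (a := C) ?_
      filter_upwards [eventually_ge_atTop 1] with n hn
      have hn' : (0 : ℝ) < n := by exact_mod_cast hn
      rw [div_le_iff₀ hn']
      calc birkhoffSum g φ n x ≤ ∑ i ∈ Finset.range n, C :=
            Finset.sum_le_sum fun i _ => (le_abs_self _).trans (hC _ (Set.mem_univ _))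
        _ = C * n := by simp [mul_comm]
    have := eventually_lt_of_limsup_lt ((hfin x hf).trans_lt hε) hb
    obtain ⟨n, h1, h2⟩ := (this.and (eventually_ge_atTop 1)).exists
    have hn' : (0 : ℝ) < n := by exact_mod_cast h2
    refine ⟨n, h2, ?_⟩
    rw [div_lt_iff₀ hn'] at h1
    linarith
  · have hinf : {n : ℕ | g^[n] x ∈ B}.Infinite := hf
    obtain ⟨m, hm⟩ := hinf.nonempty
    obtain ⟨K, hK⟩ := exists_nat_gt (birkhoffSum g φ m x / ε)
    obtain ⟨n, hn, hnK⟩ := hinf.exists_gt (m + K)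
    refine ⟨n, by omega, ?_⟩
    obtain ⟨k, rfl⟩ : ∃ k, n = m + k := ⟨n - m, by omega⟩
    rw [birkhoffSum_add]
    have h1 : birkhoffSum g φ k (g^[m] x) ≤ 0 := by
      refine hret _ hm k (by omega) ?_
      rw [← Function.iterate_add_apply, add_comm]
      exact hn
    rw [div_lt_iff₀ hε] at hK
    have h2 : (K : ℝ) ≤ ((m + k : ℕ) : ℝ) := by exact_mod_cast (by omega)
    nlinarith

/-- Under the hypotheses of Case I, the measure uniformly distributed on
the periodic orbit of `x₀` is a `φ`-maximizing measure for `g`. -/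
theorem periodic_orbit_measure_maximizing
    {X : Type*} [MetricSpace X] [CompactSpace X]
    [MeasurableSpace X] [BorelSpace X]
    (g : X → X) (hg : Continuous g) (φ : X → ℝ) (hφ : Continuous φ) (B : Set X)
    (hret : ∀ z ∈ B, ∀ n : ℕ, 1 ≤ n → g^[n] z ∈ B → birkhoffSum g φ n z ≤ 0)
    (hfin : ∀ z : X, {n : ℕ | g^[n] z ∈ B}.Finite →
      limsup (fun n : ℕ => birkhoffSum g φ n z / n) atTop ≤ 0)
    (x₀ : X) (hx₀ : x₀ ∈ B) (n₁ : ℕ) (hn₁ : 1 ≤ n₁)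
    (hper : g^[n₁] x₀ = x₀) (hsum : birkhoffSum g φ n₁ x₀ = 0) :
    (∫ y, φ y ∂((n₁ : ENNReal)⁻¹ •
        ∑ i ∈ Finset.range n₁, Measure.dirac (g^[i] x₀))) = 0 ∧
    ∀ μ : Measure X, IsProbabilityMeasure μ → μ.map g = μ →
      ∫ y, φ y ∂μ ≤ ∫ y, φ y ∂((n₁ : ENNReal)⁻¹ •
        ∑ i ∈ Finset.range n₁, Measure.dirac (g^[i] x₀)) := by
  have h0 : (∫ y, φ y ∂((n₁ : ENNReal)⁻¹ •
        ∑ i ∈ Finset.range n₁, Measure.dirac (g^[i] x₀))) = 0 := by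
    rw [integral_smul_measure, integral_finsetSum_measure]
    · simp only [integral_dirac]
      have : ∑ i ∈ Finset.range n₁, φ (g^[i] x₀) = 0 := hsum
      rw [this, smul_zero]
    · intro i _
      exact hφ.integrable_of_hasCompactSupport (HasCompactSupport.of_compactSpace φ)
  refine ⟨h0, fun μ hμ hinv => ?_⟩
  rw [h0]
  have hint : ∀ f : X → ℝ, Continuous f → Integrable f μ := fun f hf =>
    hf.integrable_of_hasCompactSupport (HasCompactSupport.of_compactSpace f)
  refine le_of_forall_pos_le_add fun ε hε => ?_
  obtain ⟨M, hM, hMx⟩ := helper_uniform g hg (fun x => φ x - ε) (hφ.sub continuous_const)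
    (fun x => by
      obtain ⟨n, hn, hlt⟩ := helper_exists g φ hφ B hret hfin ε hε x
      refine ⟨n, hn, ?_⟩
      have : birkhoffSum g (fun x => φ x - ε) n x = birkhoffSum g φ n x - n * ε := by
        simp [birkhoffSum]
      rw [this]
      linarith)
  have hcomp : ∫ x, M (g x) ∂μ = ∫ x, M x ∂μ := by
    conv_rhs => rw [← hinv]
    rw [integral_map hg.measurable.aemeasurable hM.aestronglyMeasurable]
  have hle : ∫ x, (φ x - ε) ∂μ ≤ ∫ x, (M x - M (g x)) ∂μ :=
    integral_mono ((hint φ hφ).sub (integrable_const ε))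
      ((hint M hM).sub (hint (fun x => M (g x)) (hM.comp hg))) hMx
  rw [integral_sub (hint φ hφ) (integrable_const ε),
    integral_sub (hint M hM) (hint (fun x => M (g x)) (hM.comp hg)), hcomp] at hle
  simp at hle
  linarith
end
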